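/- Suppose θ ∈ ℝ is irrational and the connection form ω = ω⁰ + α ∈ Con(A,δ) is not O(T²)-coinvariant, i.e., α ∈ B dB has a nonzero ℤ²-homogeneous component of degree (m',−m') for some m' ≠ 0. Then the phase maps L⁰ and L¹ do not intertwine the classical and deformed covariant derivatives: there exists a ℤ²-homogeneous a ∈ A with D̄_θ(L⁰(a)) ≠ L¹(D̄(a)). -/

import Mathlib

/-!
Write `T := φbar ∘ L1`, an operator on `Ω¹(A)` which acts on the class of an element of
`ℤ²`-degree `(m + n, -m)` as the scalar `e^{πiθmn}`. Let `a` have degree `(m + 1, -m)` and suppose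
that `Dθ (L0 a) = L1 (D a)`. After applying `φbar`, the terms with `da` and `a ω⁰` agree on both
sides, and what remains is an identity between the two `α`-terms. A summand of `α` of degree
`(k, -k)` picks up the phase `e^{-πiθk}` from the star product on one side and `e^{+πiθk}` from `T`
on the other. Applying `T` once more turns this into
`T (T (a α)) = e^{2πiθm} a α` (`twice_eigen_of_intertwined`).

The classes `a α_k` are eigenvectors of `T` with eigenvalues `e^{πiθ(m + k)}`, which are pairwise
distinct because `θ` is irrational. Independence of eigenspaces then gives
`(e^{2πiθ(m + k)} - e^{2πiθm}) a α_k = 0` for each `k`, hence `a α_k = 0` for `k ≠ 0`. With `a = z1`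
and `a = z2` the sphere relation yields `α_k = z1s z1 α_k + z2s z2 α_k = 0`, contradicting the
assumption that `α` is not coinvariant.
-/

set_option synthInstance.maxHeartbeats 1000000
set_option maxHeartbeats 1000000

open scoped TensorProduct
noncomputable section

/-- The total-degree-`n` component of a `ℤ²`-graded module. -/
def totalDeg {A : Type} [AddCommMonoid A] [Module ℂ A]
    (𝒜 : ℤ × ℤ → Submodule ℂ A) (n : ℤ) : Submodule ℂ A :=
  ⨆ (p : ℤ × ℤ) (_ : p.1 + p.2 = n), 𝒜 p

/-- The phase factor `e^{πiθ(m₁m₂' − m₂m₁')}`. -/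
def phase (θ : ℝ) (p q : ℤ × ℤ) : ℂ :=
  Complex.exp (Complex.I * ((Real.pi * θ : ℝ) : ℂ) * ((p.1 * q.2 - p.2 * q.1 : ℤ) : ℂ))

/-- The cotriangular structure phase `R_θ(t_u ⊗ t_w) = e^{−2πiθ(u₁w₂ − u₂w₁)}`. -/
def rphase (θ : ℝ) (u w : ℤ × ℤ) : ℂ :=
  Complex.exp (-(Complex.I * ((2 * Real.pi * θ : ℝ) : ℂ) * ((u.1 * w.2 - u.2 * w.1 : ℤ) : ℂ)))

/-- The phase factor `e^{πiθmn}`. -/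
def lphase (θ : ℝ) (m n : ℤ) : ℂ :=
  Complex.exp (Complex.I * ((Real.pi * θ : ℝ) : ℂ) * ((m * n : ℤ) : ℂ))

/-- The `ℤ²`-degree-`p` component of `A ⊗ A`. -/
def tensorDeg {A : Type} [CommRing A] [Algebra ℂ A]
    (𝒜 : ℤ × ℤ → Submodule ℂ A) (p : ℤ × ℤ) : Submodule ℂ (A ⊗[ℂ] A) :=
  Submodule.span ℂ
    {x : A ⊗[ℂ] A | ∃ (q r : ℤ × ℤ), ∃ a ∈ 𝒜 q, ∃ a' ∈ 𝒜 r, q + r = p ∧ x = a ⊗ₜ[ℂ] a'}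

theorem phase_zero_left (θ : ℝ) (q : ℤ × ℤ) : phase θ 0 q = 1 := by simp [phase]

theorem phase_zero_right (θ : ℝ) (q : ℤ × ℤ) : phase θ q 0 = 1 := by simp [phase]

theorem phase_neg_self (θ : ℝ) (q : ℤ × ℤ) : phase θ (-q) q = 1 := by
  have : ((-q).1 * q.2 - (-q).2 * q.1 : ℤ) = 0 := by
    rw [Prod.fst_neg, Prod.snd_neg]
    ring
  simp only [phase, this]
  simp

/-- The phase of the star product and that of `L¹` on degree `(k, -k)` compensate each other. -/
theorem lphase_mul_phase (θ : ℝ) (m k : ℤ) :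
    phase θ (m + 1, -m) (k, -k) * lphase θ (m + k) 1 = lphase θ m 1 := by
  unfold phase lphase
  rw [← Complex.exp_add]
  congr 1
  push_cast
  ring

theorem phase_cocycle (θ : ℝ) (p q r : ℤ × ℤ) :
    phase θ p q * phase θ (p + q) r = phase θ p (q + r) * phase θ q r := by
  unfold phase
  rw [← Complex.exp_add, ← Complex.exp_add]
  congr 1
  simp only [Prod.fst_add, Prod.snd_add]
  push_cast
  ring

/-- On total degree `0` the deformation cocycle is trivial. -/
theorem phase_base (θ : ℝ) (k l : ℤ) : phase θ (k, -k) (l, -l) = 1 := by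
  have : (k * -l - -k * l : ℤ) = 0 := by ring
  simp only [phase, this]
  simp

theorem lphase_sq_injective {θ : ℝ} (hθ : Irrational θ) {m k : ℤ}
    (h : lphase θ m 1 ^ 2 = lphase θ k 1 ^ 2) : m = k := by
  unfold lphase at h
  rw [← Complex.exp_nat_mul, ← Complex.exp_nat_mul, Complex.exp_eq_exp_iff_exists_int] at h
  obtain ⟨N, hN⟩ := h
  have hpi : (2 * Real.pi * Complex.I : ℂ) ≠ 0 := Complex.two_pi_I_ne_zero
  have h1 : (2 * Real.pi * Complex.I : ℂ) * ((θ : ℂ) * ((m : ℂ) - k))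
      = (2 * Real.pi * Complex.I : ℂ) * N := by
    push_cast at hN
    linear_combination hN
  have h2 : θ * ((m - k : ℤ) : ℝ) = (N : ℝ) := by
    have := mul_left_cancel₀ hpi h1
    exact_mod_cast this
  by_contra hne
  exact (hθ.mul_intCast (sub_ne_zero.mpr hne)).ne_int N h2

/-- If vectors `y k` with pairwise distinct eigenvalues `μ k` satisfy a linear relation, every
term of the relation vanishes. -/
theorem eigen_terms_eq_zero {V : Type*} [AddCommGroup V] [Module ℂ V] (T : Module.End ℂ V)
    (s : Finset ℤ) (μ c : ℤ → ℂ) (hμ : Function.Injective μ) (y : ℤ → V)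
    (hy : ∀ k ∈ s, T (y k) = μ k • y k) (hsum : ∑ k ∈ s, c k • y k = 0) :
    ∀ k ∈ s, c k • y k = 0 := by
  have hind := (Module.End.eigenspaces_iSupIndep T).comp hμ
  exact (iSupIndep_iff_finsetSum_eq_zero_imp_eq_zero _).mp hind s (fun k => c k • y k)
    (fun k hk => Submodule.smul_mem _ _ (Module.End.mem_eigenspace_iff.mpr (hy k hk))) hsum

section Graded

variable {A : Type} [CommRing A] [Algebra ℂ A] {𝒜 : ℤ × ℤ → Submodule ℂ A}

theorem tmul_mem_tensorDeg {q r p : ℤ × ℤ} {a b : A} (ha : a ∈ 𝒜 q) (hb : b ∈ 𝒜 r)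
    (h : q + r = p) : a ⊗ₜ[ℂ] b ∈ tensorDeg 𝒜 p :=
  Submodule.subset_span ⟨q, r, a, ha, b, hb, h, rfl⟩

theorem mem_totalDeg {p : ℤ × ℤ} {n : ℤ} (h : p.1 + p.2 = n) {a : A} (ha : a ∈ 𝒜 p) :
    a ∈ totalDeg 𝒜 n :=
  (le_iSup₂_of_le (f := fun (p : ℤ × ℤ) (_ : p.1 + p.2 = n) => 𝒜 p) p h le_rfl) ha

theorem map_mulLeft_mem_tensorDeg [GradedAlgebra 𝒜] {p q : ℤ × ℤ} {a : A} (ha : a ∈ 𝒜 p)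
    {x : A ⊗[ℂ] A} (hx : x ∈ tensorDeg 𝒜 q) :
    TensorProduct.map (LinearMap.mulLeft ℂ a) LinearMap.id x ∈ tensorDeg 𝒜 (p + q) := by
  induction hx using Submodule.span_induction with
  | mem x hx =>
    obtain ⟨u, r, b, hb, c, hc, rfl, rfl⟩ := hx
    exact tmul_mem_tensorDeg (SetLike.mul_mem_graded ha hb) hc (add_assoc _ _ _)
  | zero => simp
  | add x y _ _ hx hy => rw [map_add]; exact add_mem hx hy
  | smul c x _ hx => rw [map_smul]; exact Submodule.smul_mem _ _ hx

/-- A bilinear map on `A` vanishes on the total-degree-`0` subalgebra if it vanishes on pairs of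
`ℤ²`-homogeneous elements of it. -/
theorem bilin_eq_zero_of_homogeneous {V : Type*} [AddCommGroup V] [Module ℂ V]
    (G : A →ₗ[ℂ] A →ₗ[ℂ] V)
    (hG : ∀ k l : ℤ, ∀ b ∈ 𝒜 (k, -k), ∀ b' ∈ 𝒜 (l, -l), G b b' = 0)
    {b b' : A} (hb : b ∈ totalDeg 𝒜 0) (hb' : b' ∈ totalDeg 𝒜 0) : G b b' = 0 := by
  have key : ∀ S : Submodule ℂ A, (∀ k : ℤ, 𝒜 (k, -k) ≤ S) → totalDeg 𝒜 0 ≤ S := by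
    intro S hS
    refine iSup₂_le fun p hp => ?_
    have : p = (p.1, -p.1) := Prod.ext rfl (by simp; omega)
    rw [this]
    exact hS _
  have h1 : ∀ k : ℤ, ∀ b ∈ 𝒜 (k, -k), G b b' = 0 := fun k b hb =>
    key (LinearMap.ker (G b)) (fun l c hc => LinearMap.mem_ker.mpr (hG k l b hb c hc)) hb'
  exact key (LinearMap.ker (G.flip b')) (fun k c hc => LinearMap.mem_ker.mpr (h1 k c hc)) hb

/-- The left action of `A_θ` on `Ω¹(A_θ)` corresponds under `φ` to the classical one up to the
phase of the degrees involved. -/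
theorem phi_map_stp [GradedAlgebra 𝒜] {θ : ℝ} {stp : A →ₗ[ℂ] A →ₗ[ℂ] A}
    (hstp : ∀ (p q : ℤ × ℤ), ∀ a ∈ 𝒜 p, ∀ a' ∈ 𝒜 q, stp a a' = phase θ p q • (a * a'))
    {φ : A ⊗[ℂ] A →ₗ[ℂ] A ⊗[ℂ] A}
    (hφ : ∀ (p q : ℤ × ℤ), ∀ a ∈ 𝒜 p, ∀ a' ∈ 𝒜 q,
      φ (a ⊗ₜ[ℂ] a') = phase θ p q • (a ⊗ₜ[ℂ] a'))
    {p q r : ℤ × ℤ} {a b c : A} (ha : a ∈ 𝒜 p) (hb : b ∈ 𝒜 q) (hc : c ∈ 𝒜 r) :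
    φ (TensorProduct.map (stp a) LinearMap.id (b ⊗ₜ[ℂ] c))
      = (phase θ p (q + r) * phase θ q r) • ((a * b) ⊗ₜ[ℂ] c) := by
  rw [TensorProduct.map_tmul, hstp p q a ha b hb, LinearMap.id_apply, ← TensorProduct.smul_tmul',
    map_smul, hφ (p + q) r _ (SetLike.mul_mem_graded ha hb) c hc, smul_smul, phase_cocycle]

/-- Over elements of `B dB` the phases of the deformed action and of `T` cancel, leaving only
the phase of `a`. -/
theorem T_phi_map_stp [GradedAlgebra 𝒜] {θ : ℝ} {stp : A →ₗ[ℂ] A →ₗ[ℂ] A}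
    (hstp : ∀ (p q : ℤ × ℤ), ∀ a ∈ 𝒜 p, ∀ a' ∈ 𝒜 q, stp a a' = phase θ p q • (a * a'))
    {φ : A ⊗[ℂ] A →ₗ[ℂ] A ⊗[ℂ] A}
    (hφ : ∀ (p q : ℤ × ℤ), ∀ a ∈ 𝒜 p, ∀ a' ∈ 𝒜 q,
      φ (a ⊗ₜ[ℂ] a') = phase θ p q • (a ⊗ₜ[ℂ] a'))
    {K2 : Submodule ℂ (A ⊗[ℂ] A)} {T : Module.End ℂ ((A ⊗[ℂ] A) ⧸ K2)}
    (hT : ∀ (m n : ℤ), ∀ x ∈ tensorDeg 𝒜 (m + n, -m), T (K2.mkQ x) = lphase θ m n • K2.mkQ x)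
    {m : ℤ} {a : A} (ha : a ∈ 𝒜 (m + 1, -m)) {x : A ⊗[ℂ] A}
    (hx : x ∈ Submodule.span ℂ {y : A ⊗[ℂ] A | ∃ b ∈ totalDeg 𝒜 0, ∃ b' ∈ totalDeg 𝒜 0,
        y = b ⊗ₜ[ℂ] b' - (b * b') ⊗ₜ[ℂ] (1 : A)}) :
    T (K2.mkQ (φ (TensorProduct.map (stp a) LinearMap.id x)))
      = lphase θ m 1 • K2.mkQ (TensorProduct.map (LinearMap.mulLeft ℂ a) LinearMap.id x) := by
  -- `F` is the difference of the two sides as a linear map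
  let F : A ⊗[ℂ] A →ₗ[ℂ] ((A ⊗[ℂ] A) ⧸ K2) :=
    T ∘ₗ K2.mkQ ∘ₗ φ ∘ₗ TensorProduct.map (stp a) LinearMap.id
      - lphase θ m 1 • (K2.mkQ ∘ₗ TensorProduct.map (LinearMap.mulLeft ℂ a) LinearMap.id)
  have hF : ∀ k l : ℤ, ∀ b ∈ 𝒜 (k, -k), ∀ b' ∈ 𝒜 (l, -l), F (b ⊗ₜ[ℂ] b') = 0 := by
    intro k l b hb b' hb'
    have hsum : ((k, -k) : ℤ × ℤ) + (l, -l) = (k + l, -(k + l)) := by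
      ext <;> simp; ring
    have hmem : (a * b) ⊗ₜ[ℂ] b' ∈ tensorDeg 𝒜 ((m + (k + l)) + 1, -(m + (k + l))) :=
      tmul_mem_tensorDeg (SetLike.mul_mem_graded ha hb) hb' (by ext <;> simp <;> ring)
    change T (K2.mkQ (φ (TensorProduct.map (stp a) LinearMap.id (b ⊗ₜ[ℂ] b'))))
      - lphase θ m 1 • K2.mkQ ((a * b) ⊗ₜ[ℂ] b') = 0
    rw [phi_map_stp hstp hφ ha hb hb', phase_base, mul_one, hsum, map_smul, map_smul,
      hT _ _ _ hmem, smul_smul, lphase_mul_phase, sub_self]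
  have hle : Submodule.span ℂ {y : A ⊗[ℂ] A | ∃ b ∈ totalDeg 𝒜 0, ∃ b' ∈ totalDeg 𝒜 0,
        y = b ⊗ₜ[ℂ] b' - (b * b') ⊗ₜ[ℂ] (1 : A)} ≤ LinearMap.ker F := by
    rw [Submodule.span_le]
    rintro y ⟨b, hb, b', hb', rfl⟩
    refine LinearMap.mem_ker.mpr ?_
    refine bilin_eq_zero_of_homogeneous (𝒜 := 𝒜)
      (((TensorProduct.mk ℂ A A)
        - (LinearMap.mul ℂ A).compr₂ ((TensorProduct.mk ℂ A A).flip 1)).compr₂ F) ?_ hb hb'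
    intro k l c hc c' hc'
    change F (c ⊗ₜ[ℂ] c' - (c * c') ⊗ₜ[ℂ] (1 : A)) = 0
    have hcc : c * c' ∈ 𝒜 (k + l, -(k + l)) := by
      have := SetLike.mul_mem_graded hc hc'
      rwa [show ((k, -k) : ℤ × ℤ) + (l, -l) = (k + l, -(k + l)) by ext <;> simp; ring] at this
    have h1 : (1 : A) ∈ 𝒜 ((0 : ℤ), -(0 : ℤ)) :=
      (SetLike.GradedOne.one_mem : (1 : A) ∈ 𝒜 0)
    rw [map_sub, hF k l c hc c' hc', hF (k + l) 0 _ hcc 1 h1, sub_self]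
  exact sub_eq_zero.mp (LinearMap.mem_ker.mp (hle hx))

/-- If the covariant derivatives are intertwined at `a` (the hypothesis `h` is that equation after
`φbar`), then `T ∘ T` acts on `a α` as the square of the
phase of `a`. Here `x` represents `α`. -/
theorem twice_eigen_of_intertwined [GradedAlgebra 𝒜] {θ : ℝ} {stp : A →ₗ[ℂ] A →ₗ[ℂ] A}
    (hstp : ∀ (p q : ℤ × ℤ), ∀ a ∈ 𝒜 p, ∀ a' ∈ 𝒜 q, stp a a' = phase θ p q • (a * a'))
    {φ : A ⊗[ℂ] A →ₗ[ℂ] A ⊗[ℂ] A}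
    (hφ : ∀ (p q : ℤ × ℤ), ∀ a ∈ 𝒜 p, ∀ a' ∈ 𝒜 q,
      φ (a ⊗ₜ[ℂ] a') = phase θ p q • (a ⊗ₜ[ℂ] a'))
    {z1 z2 z1s z2s : A}
    (hz1 : z1 ∈ 𝒜 (1, 0)) (hz2 : z2 ∈ 𝒜 (0, 1))
    (hz1s : z1s ∈ 𝒜 (-1, 0)) (hz2s : z2s ∈ 𝒜 (0, -1))
    {ωrep ωθrep : A ⊗[ℂ] A}
    (hω : ωrep = z1s ⊗ₜ[ℂ] z1 - (z1s * z1) ⊗ₜ[ℂ] (1 : A)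
        + (z2s ⊗ₜ[ℂ] z2 - (z2s * z2) ⊗ₜ[ℂ] (1 : A)))
    (hωθ : ωθrep = (stp z1s 1) ⊗ₜ[ℂ] z1 - (stp z1s z1) ⊗ₜ[ℂ] (1 : A)
        + ((stp z2s 1) ⊗ₜ[ℂ] z2 - (stp z2s z2) ⊗ₜ[ℂ] (1 : A)))
    {K2 : Submodule ℂ (A ⊗[ℂ] A)} {T : Module.End ℂ ((A ⊗[ℂ] A) ⧸ K2)}
    (hT : ∀ (m n : ℤ), ∀ x ∈ tensorDeg 𝒜 (m + n, -m), T (K2.mkQ x) = lphase θ m n • K2.mkQ x)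
    {m : ℤ} {a : A} (ha : a ∈ 𝒜 (m + 1, -m)) {x : A ⊗[ℂ] A}
    (hx : x ∈ Submodule.span ℂ {y : A ⊗[ℂ] A | ∃ b ∈ totalDeg 𝒜 0, ∃ b' ∈ totalDeg 𝒜 0,
        y = b ⊗ₜ[ℂ] b' - (b * b') ⊗ₜ[ℂ] (1 : A)})
    (h : lphase θ m 1 • (K2.mkQ (φ ((1 : A) ⊗ₜ[ℂ] a - a ⊗ₜ[ℂ] (1 : A)))
          - K2.mkQ (φ (TensorProduct.map (stp a) LinearMap.id (ωθrep + x))))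
        = T (K2.mkQ ((1 : A) ⊗ₜ[ℂ] a - a ⊗ₜ[ℂ] (1 : A)))
          - T (K2.mkQ (TensorProduct.map (LinearMap.mulLeft ℂ a) LinearMap.id (ωrep + x)))) :
    T (T (K2.mkQ (TensorProduct.map (LinearMap.mulLeft ℂ a) LinearMap.id x)))
      = lphase θ m 1 ^ 2
        • K2.mkQ (TensorProduct.map (LinearMap.mulLeft ℂ a) LinearMap.id x) := by
  have h1 : (1 : A) ∈ 𝒜 0 := SetLike.GradedOne.one_mem
  have hda : φ ((1 : A) ⊗ₜ[ℂ] a - a ⊗ₜ[ℂ] (1 : A)) = (1 : A) ⊗ₜ[ℂ] a - a ⊗ₜ[ℂ] (1 : A) := by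
    rw [map_sub, hφ 0 _ 1 h1 a ha, hφ _ 0 a ha 1 h1, phase_zero_left, phase_zero_right,
      one_smul, one_smul]
  have hTda := hT m 1 ((1 : A) ⊗ₜ[ℂ] a - a ⊗ₜ[ℂ] (1 : A))
    (sub_mem (tmul_mem_tensorDeg h1 ha (zero_add _)) (tmul_mem_tensorDeg ha h1 (add_zero _)))
  -- each summand of `ω⁰` is built from generators `w`, `v` of opposite degrees
  have hpair : ∀ (q : ℤ × ℤ) (w v : A), w ∈ 𝒜 (-q) → v ∈ 𝒜 q →
      φ (TensorProduct.map (stp a) LinearMap.id ((stp w 1) ⊗ₜ[ℂ] v - (stp w v) ⊗ₜ[ℂ] (1 : A)))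
        = TensorProduct.map (LinearMap.mulLeft ℂ a) LinearMap.id
          (w ⊗ₜ[ℂ] v - (w * v) ⊗ₜ[ℂ] (1 : A)) ∧
      w ⊗ₜ[ℂ] v - (w * v) ⊗ₜ[ℂ] (1 : A) ∈ tensorDeg 𝒜 0 := by
    intro q w v hw hv
    have hwv : w * v ∈ 𝒜 0 := by
      have := SetLike.mul_mem_graded hw hv
      rwa [neg_add_cancel] at this
    refine ⟨?_, sub_mem (tmul_mem_tensorDeg hw hv (neg_add_cancel q))
      (tmul_mem_tensorDeg hwv h1 (add_zero _))⟩
    rw [hstp _ 0 w hw 1 h1, hstp _ _ w hw v hv, phase_zero_right, phase_neg_self, one_smul,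
      one_smul, mul_one, map_sub, map_sub, phi_map_stp hstp hφ ha hw hv,
      phi_map_stp hstp hφ ha hwv h1, neg_add_cancel, add_zero, phase_neg_self, phase_zero_right,
      phase_zero_right, mul_one, one_smul, one_smul, map_sub]
    rfl
  obtain ⟨hp1, hd1⟩ := hpair (1, 0) z1s z1 (by simpa using hz1s) hz1
  obtain ⟨hp2, hd2⟩ := hpair (0, 1) z2s z2 (by simpa using hz2s) hz2
  have hφω : φ (TensorProduct.map (stp a) LinearMap.id ωθrep)
      = TensorProduct.map (LinearMap.mulLeft ℂ a) LinearMap.id ωrep := by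
    rw [hωθ, hω, map_add, map_add, hp1, hp2, map_add]
  have hωdeg : ωrep ∈ tensorDeg 𝒜 0 := hω ▸ add_mem hd1 hd2
  have hTω := hT m 1 _ (by simpa using map_mulLeft_mem_tensorDeg ha hωdeg)
  have hred : lphase θ m 1 • K2.mkQ (φ (TensorProduct.map (stp a) LinearMap.id x))
      = T (K2.mkQ (TensorProduct.map (LinearMap.mulLeft ℂ a) LinearMap.id x)) := by
    simp only [map_add] at h
    rw [hda, hφω, hTda, hTω, smul_sub, smul_add] at h
    exact add_left_cancel (sub_right_injective h)
  rw [← hred, map_smul, T_phi_map_stp hstp hφ hT ha hx, smul_smul, sq]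

end Graded

/-- if `θ` is irrational and the connection `ω = ω⁰ + α ∈ Con(A,δ)` is
not `O(T²)`-coinvariant (`α` has a nonzero homogeneous component of degree `(m',−m')`
with `m' ≠ 0`), then the phase maps `L⁰` and `L¹` do not intertwine the classical and
deformed covariant derivatives: there is a `ℤ²`-homogeneous `a ∈ A` with
`D̄_θ(L⁰(a)) ≠ L¹(D̄(a))`. -/
theorem covariant_derivatives_not_intertwined
    (A : Type) [CommRing A] [Algebra ℂ A]
    (𝒜 : ℤ × ℤ → Submodule ℂ A) [GradedAlgebra 𝒜]
    (z1 z2 z1s z2s : A)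
    (hz1 : z1 ∈ 𝒜 (1, 0)) (hz2 : z2 ∈ 𝒜 (0, 1))
    (hz1s : z1s ∈ 𝒜 (-1, 0)) (hz2s : z2s ∈ 𝒜 (0, -1))
    (hrel : z1s * z1 + z2s * z2 = 1)
    (huniv : ∀ (C : Type) [CommRing C] [Algebra ℂ C] (w1 w2 w1s w2s : C),
      w1s * w1 + w2s * w2 = 1 →
      ∃! f : A →ₐ[ℂ] C, f z1 = w1 ∧ f z2 = w2 ∧ f z1s = w1s ∧ f z2s = w2s)
    (θ : ℝ) (hθ : Irrational θ)
    (stp : A →ₗ[ℂ] A →ₗ[ℂ] A)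
    (hstp : ∀ (p q : ℤ × ℤ), ∀ a ∈ 𝒜 p, ∀ a' ∈ 𝒜 q, stp a a' = phase θ p q • (a * a'))
    (bmul : A ⊗[ℂ] A →ₗ[ℂ] A ⊗[ℂ] A →ₗ[ℂ] A ⊗[ℂ] A)
    (hbmul : ∀ (p p' u u' : ℤ × ℤ), ∀ a ∈ 𝒜 p, ∀ a' ∈ 𝒜 p', ∀ c ∈ 𝒜 u, ∀ c' ∈ 𝒜 u',
      bmul (a ⊗ₜ[ℂ] a') (c ⊗ₜ[ℂ] c')
        = rphase θ u p' • ((stp a c) ⊗ₜ[ℂ] (stp a' c')))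
    (φ : A ⊗[ℂ] A →ₗ[ℂ] A ⊗[ℂ] A)
    (hφ : ∀ (p q : ℤ × ℤ), ∀ a ∈ 𝒜 p, ∀ a' ∈ 𝒜 q,
      φ (a ⊗ₜ[ℂ] a') = phase θ p q • (a ⊗ₜ[ℂ] a')) :
    ∀ (K K2 Kθ K2θ : Submodule ℂ (A ⊗[ℂ] A)) (ωrep ωθrep : A ⊗[ℂ] A)
      (BdB : Submodule ℂ (A ⊗[ℂ] A)),
      K = LinearMap.ker (LinearMap.mul' ℂ A) →
      K2 = K * K →
      Kθ = LinearMap.ker (TensorProduct.lift stp) →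
      K2θ = Submodule.span ℂ {y : A ⊗[ℂ] A | ∃ x ∈ Kθ, ∃ x' ∈ Kθ, y = bmul x x'} →
      ωrep = z1s ⊗ₜ[ℂ] z1 - (z1s * z1) ⊗ₜ[ℂ] (1 : A)
        + (z2s ⊗ₜ[ℂ] z2 - (z2s * z2) ⊗ₜ[ℂ] (1 : A)) →
      ωθrep = (stp z1s 1) ⊗ₜ[ℂ] z1 - (stp z1s z1) ⊗ₜ[ℂ] (1 : A)
        + ((stp z2s 1) ⊗ₜ[ℂ] z2 - (stp z2s z2) ⊗ₜ[ℂ] (1 : A)) →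
      BdB = Submodule.span ℂ {y : A ⊗[ℂ] A | ∃ b ∈ totalDeg 𝒜 0, ∃ b' ∈ totalDeg 𝒜 0,
        y = b ⊗ₜ[ℂ] b' - (b * b') ⊗ₜ[ℂ] (1 : A)} →
      -- the gauge potential `α ∈ Ω¹(B)`, with homogeneous decomposition having a
      -- nonzero component of degree `(m',−m')` for some `m' ≠ 0`
      ∀ (αr : A ⊗[ℂ] A), αr ∈ BdB →
      ∀ (s : Finset ℤ) (αc : ℤ → A ⊗[ℂ] A),
        αr = ∑ m' ∈ s, αc m' →
        (∀ m' ∈ s, αc m' ∈ tensorDeg 𝒜 (m', -m')) →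
        (∃ m' ∈ s, m' ≠ 0 ∧ K2.mkQ (αc m') ≠ 0) →
      -- the left actions of `A` on `Ω¹(A)` and of `A_θ` on `Ω¹(A_θ)`
      ∀ (lact : A → ((A ⊗[ℂ] A) ⧸ K2) →ₗ[ℂ] ((A ⊗[ℂ] A) ⧸ K2)),
        (∀ (a : A) (x : A ⊗[ℂ] A), lact a (K2.mkQ x)
          = K2.mkQ (TensorProduct.map (LinearMap.mulLeft ℂ a) LinearMap.id x)) →
      ∀ (lactθ : A → ((A ⊗[ℂ] A) ⧸ K2θ) →ₗ[ℂ] ((A ⊗[ℂ] A) ⧸ K2θ)),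
        (∀ (a : A) (x : A ⊗[ℂ] A), lactθ a (K2θ.mkQ x)
          = K2θ.mkQ (TensorProduct.map (stp a) LinearMap.id x)) →
      -- the classical covariant derivative `D̄(a) = da − n a ω`, `ω = ω⁰ + α`
      ∀ (D : A →ₗ[ℂ] ((A ⊗[ℂ] A) ⧸ K2)),
        (∀ (n : ℤ), ∀ a ∈ totalDeg 𝒜 n,
          D a = K2.mkQ ((1 : A) ⊗ₜ[ℂ] a - a ⊗ₜ[ℂ] (1 : A))
            - (n : ℂ) • lact a (K2.mkQ (ωrep + αr))) →
      -- the deformed covariant derivative `D̄_θ(a) = d_θa − n a ⋆ ω_θ`, `ω_θ = ω⁰_θ + α`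
      ∀ (Dθ : A →ₗ[ℂ] ((A ⊗[ℂ] A) ⧸ K2θ)),
        (∀ (n : ℤ), ∀ a ∈ totalDeg 𝒜 n,
          Dθ a = K2θ.mkQ ((1 : A) ⊗ₜ[ℂ] a - a ⊗ₜ[ℂ] (1 : A))
            - (n : ℂ) • lactθ a (K2θ.mkQ (ωθrep + αr))) →
      -- the phase maps `L⁰ : A → A_θ` and `L¹ : Ω¹(A) → Ω¹(A_θ)` (the latter being
      -- the phase multiplication composed with `φ̄_θ⁻¹`)
      ∀ (L0 : A →ₗ[ℂ] A),
        (∀ (m n : ℤ), ∀ a ∈ 𝒜 (m + n, -m), L0 a = lphase θ m n • a) →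
      ∀ (φbar : ((A ⊗[ℂ] A) ⧸ K2θ) →ₗ[ℂ] ((A ⊗[ℂ] A) ⧸ K2)),
        (∀ x : A ⊗[ℂ] A, φbar (K2θ.mkQ x) = K2.mkQ (φ x)) →
      ∀ (L1 : ((A ⊗[ℂ] A) ⧸ K2) →ₗ[ℂ] ((A ⊗[ℂ] A) ⧸ K2θ)),
        (∀ (m n : ℤ), ∀ x ∈ tensorDeg 𝒜 (m + n, -m),
          φbar (L1 (K2.mkQ x)) = lphase θ m n • K2.mkQ x) →
      -- conclusion: the covariant derivatives are not intertwined
      ∃ (p : ℤ × ℤ) (a : A), a ∈ 𝒜 p ∧ Dθ (L0 a) ≠ L1 (D a) := by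
  intro K K2 Kθ K2θ ωrep ωθrep BdB hK hK2 hKθ hK2θ hω hωθ hBdB αr hαr s αc hsum hdeg hne
    lact hlact lactθ hlactθ D hD Dθ hDθ L0 hL0 φbar hφbar L1 hL1
  by_contra hcon
  push Not at hcon
  subst hBdB
  let T : Module.End ℂ ((A ⊗[ℂ] A) ⧸ K2) := φbar ∘ₗ L1
  have hT : ∀ (m n : ℤ), ∀ x ∈ tensorDeg 𝒜 (m + n, -m),
      T (K2.mkQ x) = lphase θ m n • K2.mkQ x := hL1
  obtain ⟨m', hm's, hm'0, hm'ne⟩ := hne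
  have key : ∀ (m : ℤ) (a : A), a ∈ 𝒜 (m + 1, -m) →
      K2.mkQ (TensorProduct.map (LinearMap.mulLeft ℂ a) LinearMap.id (αc m')) = 0 := by
    intro m a ha
    have hrec := twice_eigen_of_intertwined hstp hφ hz1 hz2 hz1s hz2s hω hωθ hT ha hαr
      (by
        have h := congrArg φbar (hcon _ a ha)
        have hat : a ∈ totalDeg 𝒜 1 := mem_totalDeg (by simp) ha
        rw [hL0 m 1 a ha, map_smul, map_smul, hDθ 1 a hat, hlactθ, Int.cast_one, one_smul,
          map_sub, hφbar, hφbar] at h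
        rw [h]
        change T (D a) = _
        rw [hD 1 a hat, hlact, Int.cast_one, one_smul, map_sub])
    have hy : ∀ k ∈ s, T (K2.mkQ (TensorProduct.map (LinearMap.mulLeft ℂ a) LinearMap.id (αc k)))
        = lphase θ (m + k) 1
          • K2.mkQ (TensorProduct.map (LinearMap.mulLeft ℂ a) LinearMap.id (αc k)) := by
      intro k hk
      refine hT (m + k) 1 _ ?_
      have := map_mulLeft_mem_tensorDeg ha (hdeg k hk)
      rwa [show ((m + 1, -m) : ℤ × ℤ) + (k, -k) = (m + k + 1, -(m + k)) by
        ext <;> simp <;> ring] at this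
    have hrel0 : ∑ k ∈ s, (lphase θ (m + k) 1 ^ 2 - lphase θ m 1 ^ 2)
        • K2.mkQ (TensorProduct.map (LinearMap.mulLeft ℂ a) LinearMap.id (αc k)) = 0 := by
      rw [hsum, map_sum, map_sum, map_sum, map_sum, Finset.smul_sum, ← sub_eq_zero,
        ← Finset.sum_sub_distrib] at hrec
      rw [← hrec]
      refine Finset.sum_congr rfl fun k hk => ?_
      rw [hy k hk, map_smul, hy k hk, smul_smul, sub_smul, sq (lphase θ (m + k) 1)]
    have hinj : Function.Injective fun k : ℤ => lphase θ (m + k) 1 := fun k l hkl =>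
      add_left_cancel (lphase_sq_injective hθ (congrArg (· ^ 2) hkl))
    have hterm := eigen_terms_eq_zero T s _ _ hinj _ hy hrel0 m' hm's
    refine (smul_eq_zero.mp hterm).resolve_left fun h0 => hm'0 ?_
    have := lphase_sq_injective hθ (sub_eq_zero.mp h0)
    omega
  have hk1 := congrArg (lact z1s) (key 0 z1 (by simpa using hz1))
  have hk2 := congrArg (lact z2s) (key (-1) z2 (by simpa using hz2))
  rw [hlact, map_zero] at hk1 hk2
  apply hm'ne
  have hid : αc m' = TensorProduct.map (LinearMap.mulLeft ℂ z1s) LinearMap.id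
        (TensorProduct.map (LinearMap.mulLeft ℂ z1) LinearMap.id (αc m'))
      + TensorProduct.map (LinearMap.mulLeft ℂ z2s) LinearMap.id
        (TensorProduct.map (LinearMap.mulLeft ℂ z2) LinearMap.id (αc m')) := by
    induction αc m' using TensorProduct.induction_on with
    | zero => simp
    | tmul b c =>
      simp only [TensorProduct.map_tmul, LinearMap.mulLeft_apply, LinearMap.id_apply]
      rw [← TensorProduct.add_tmul, ← mul_assoc, ← mul_assoc, ← add_mul, hrel, one_mul]
    | add x y hx hy =>
      simp only [map_add]
      nth_rewrite 1 [hx, hy]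
      abel
  rw [hid, map_add, hk1, hk2, add_zero]
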